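/- (Expansion of the Tutte polynomial in the activities θ* and θ, realizable case.) For every vector configuration v : Fin n → V and all real numbers x, y: t(x, y) = ∑_{A ⊆ Fin n} (x-1)^{θ*(A)} (y-1)^{θ(A)}. -/

import Mathlib

open Set Submodule

/-- The reorientation of the vector configuration `v` on the subset `A`:
vectors indexed by `A` are negated. -/
def reorient {n : ℕ} {V : Type*} [AddCommGroup V] (v : Fin n → V) (A : Finset (Fin n)) :
    Fin n → V :=
  fun i => if i ∈ A then -v i else v i

/-- `a` is orientation-active for the configuration `w`: it is the smallest element of a
positive circuit, i.e. there is a nonnegative linear dependence with positive coefficient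
at `a` and zero coefficients below `a`. -/
def OActive {n : ℕ} {V : Type*} [AddCommGroup V] [Module ℝ V]
    (w : Fin n → V) (a : Fin n) : Prop :=
  ∃ c : Fin n → ℝ, (∀ i, 0 ≤ c i) ∧ (∑ i, c i • w i) = 0 ∧ 0 < c a ∧ ∀ i < a, c i = 0

/-- `a` is dually orientation-active for the configuration `w`: it is the smallest element of
a positive cocircuit, i.e. there is a linear functional, nonnegative on the configuration,
positive at `w a` and vanishing on the vectors below `a`. -/
def ODualActive {n : ℕ} {V : Type*} [AddCommGroup V] [Module ℝ V]
    (w : Fin n → V) (a : Fin n) : Prop :=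
  ∃ f : V →ₗ[ℝ] ℝ, (∀ i, 0 ≤ f (w i)) ∧ 0 < f (w a) ∧ ∀ i < a, f (w i) = 0

/-- `θ*(A)`: the number of elements outside `A` that are dually orientation-active for `v_A`. -/
noncomputable def thetaStar {n : ℕ} {V : Type*} [AddCommGroup V] [Module ℝ V]
    (v : Fin n → V) (A : Finset (Fin n)) : ℕ :=
  {a : Fin n | a ∉ A ∧ ODualActive (reorient v A) a}.ncard

/-- `θ̄*(A)`: the number of elements of `A` that are dually orientation-active for `v_A`. -/
noncomputable def thetaStarBar {n : ℕ} {V : Type*} [AddCommGroup V] [Module ℝ V]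
    (v : Fin n → V) (A : Finset (Fin n)) : ℕ :=
  {a : Fin n | a ∈ A ∧ ODualActive (reorient v A) a}.ncard

/-- `θ(A)`: the number of elements outside `A` that are orientation-active for `v_A`. -/
noncomputable def theta {n : ℕ} {V : Type*} [AddCommGroup V] [Module ℝ V]
    (v : Fin n → V) (A : Finset (Fin n)) : ℕ :=
  {a : Fin n | a ∉ A ∧ OActive (reorient v A) a}.ncard

/-- `θ̄(A)`: the number of elements of `A` that are orientation-active for `v_A`. -/
noncomputable def thetaBar {n : ℕ} {V : Type*} [AddCommGroup V] [Module ℝ V]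
    (v : Fin n → V) (A : Finset (Fin n)) : ℕ :=
  {a : Fin n | a ∈ A ∧ OActive (reorient v A) a}.ncard

/-- The rank of a set of indices: the dimension of the span of the corresponding vectors. -/
noncomputable def vrank {n : ℕ} {V : Type*} [AddCommGroup V] [Module ℝ V]
    (v : Fin n → V) (S : Set (Fin n)) : ℕ :=
  Module.finrank ℝ ↥(span ℝ (v '' S))

/-- The Tutte polynomial of the matroid realized by the configuration `v`:
`t(x,y) = ∑_{A ⊆ Fin n} (x-1)^(r(E) - r(A)) * (y-1)^(|A| - r(A))`. -/
noncomputable def tutteV {n : ℕ} {V : Type*} [AddCommGroup V] [Module ℝ V]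
    (v : Fin n → V) (x y : ℝ) : ℝ :=
  ∑ A : Finset (Fin n),
    (x - 1) ^ (vrank v Set.univ - vrank v ↑A) * (y - 1) ^ (A.card - vrank v ↑A)

set_option linter.unusedSectionVars false

section helpers

variable {n : ℕ} {V : Type*} [AddCommGroup V] [Module ℝ V]

/-- Activity of `a` in the configuration `w` extended by a last vector `u`. -/
def OP (w : Fin n → V) (u : V) (a : Fin n) : Prop :=
  ∃ c : Fin n → ℝ, ∃ t : ℝ, (∀ i, 0 ≤ c i) ∧ 0 ≤ t ∧ (∑ i, c i • w i) + t • u = 0 ∧ 0 < c a ∧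
    ∀ i < a, c i = 0

/-- Dual activity of `a` in the configuration `w` extended by a last vector `u`. -/
def DP (w : Fin n → V) (u : V) (a : Fin n) : Prop :=
  ∃ f : V →ₗ[ℝ] ℝ, (∀ i, 0 ≤ f (w i)) ∧ 0 ≤ f u ∧ 0 < f (w a) ∧ ∀ i < a, f (w i) = 0

lemma OActive_castSucc (v : Fin (n + 1) → V) (a : Fin n) :
    OActive v a.castSucc ↔ OP (fun i => v i.castSucc) (v (Fin.last n)) a := by
  constructor
  · rintro ⟨c, h0, hs, ha, hl⟩
    refine ⟨fun i => c i.castSucc, c (Fin.last n), fun i => h0 _, h0 _, ?_, ha, fun i hi => hl _ ?_⟩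
    · rw [Fin.sum_univ_castSucc] at hs; exact hs
    · exact Fin.castSucc_lt_castSucc_iff.2 hi
  · rintro ⟨c, t, h0, ht, hs, ha, hl⟩
    refine ⟨Fin.snoc c t, ?_, ?_, ?_, ?_⟩
    · intro i; induction i using Fin.lastCases <;> simp [h0, ht]
    · rw [Fin.sum_univ_castSucc]; simpa using hs
    · simpa using ha
    · intro i
      induction i using Fin.lastCases with
      | last => intro h; exact absurd h (by simp [Fin.le_last])
      | cast i => intro h; simpa using hl i (Fin.castSucc_lt_castSucc_iff.1 h)

lemma ODualActive_castSucc (v : Fin (n + 1) → V) (a : Fin n) :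
    ODualActive v a.castSucc ↔ DP (fun i => v i.castSucc) (v (Fin.last n)) a := by
  constructor
  · rintro ⟨f, h0, ha, hl⟩
    exact ⟨f, fun i => h0 _, h0 _, ha, fun i hi => hl _ (Fin.castSucc_lt_castSucc_iff.2 hi)⟩
  · rintro ⟨f, h0, hu, ha, hl⟩
    refine ⟨f, ?_, ha, ?_⟩
    · intro i; induction i using Fin.lastCases <;> simp [h0, hu]
    · intro i
      induction i using Fin.lastCases with
      | last => intro h; exact absurd h (by simp [Fin.le_last])
      | cast i => intro h; simpa using hl i (Fin.castSucc_lt_castSucc_iff.1 h)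

lemma OActive_last (v : Fin (n + 1) → V) :
    OActive v (Fin.last n) ↔ v (Fin.last n) = 0 := by
  constructor
  · rintro ⟨c, h0, hs, ha, hl⟩
    rw [Fin.sum_univ_castSucc] at hs
    have : ∑ i : Fin n, c i.castSucc • v i.castSucc = 0 :=
      Finset.sum_eq_zero fun i _ => by rw [hl _ (Fin.castSucc_lt_last i), zero_smul]
    rw [this, zero_add] at hs
    exact (smul_eq_zero.1 hs).resolve_left ha.ne'
  · intro h
    refine ⟨Pi.single (Fin.last n) 1, ?_, ?_, by simp, ?_⟩
    · intro i; by_cases hi : i = Fin.last n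
      · subst hi; simp
      · simp [hi]
    · rw [Fin.sum_univ_castSucc]; simp [h]
    · intro i hi; simp [hi.ne]

lemma ODualActive_last (v : Fin (n + 1) → V) :
    ODualActive v (Fin.last n) ↔
      v (Fin.last n) ∉ span ℝ (Set.range fun i : Fin n => v i.castSucc) := by
  constructor
  · rintro ⟨f, h0, ha, hl⟩ hm
    have : span ℝ (Set.range fun i : Fin n => v i.castSucc) ≤ LinearMap.ker f := by
      rw [span_le]; rintro _ ⟨i, rfl⟩; exact hl _ (Fin.castSucc_lt_last i)
    have := this hm
    rw [LinearMap.mem_ker] at this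
    linarith
  · intro h
    obtain ⟨f, hf, hk⟩ := Submodule.exists_le_ker_of_notMem h
    have hz : ∀ i : Fin n, f (v i.castSucc) = 0 := fun i => hk (subset_span ⟨i, rfl⟩)
    rcases lt_or_gt_of_ne hf with h1 | h1
    · refine ⟨-f, ?_, by simpa using h1, ?_⟩
      · intro i; induction i using Fin.lastCases <;> simp [hz, h1.le]
      · intro i; induction i using Fin.lastCases <;> simp [hz]
    · refine ⟨f, ?_, by simpa using h1, ?_⟩
      · intro i; induction i using Fin.lastCases <;> simp [hz, h1.le]
      · intro i; induction i using Fin.lastCases <;> simp [hz]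

variable (w : Fin n → V) (u : V)

lemma OP_of_OActive {a : Fin n} (h : OActive w a) : OP w u a := by
  obtain ⟨c, h0, hs, ha, hl⟩ := h
  exact ⟨c, 0, h0, le_rfl, by simp [hs], ha, hl⟩

lemma o_mix {a b : Fin n} (hab : a ≤ b) (h : OP w u a) (h' : OP w (-u) b) :
    OActive w a ∨ OActive w b := by
  obtain ⟨c, t, h0, ht, hs, ha, hl⟩ := h
  obtain ⟨d, s, k0, ks, ks', kb, kl⟩ := h'
  rcases ht.eq_or_lt with rfl | ht
  · exact Or.inl ⟨c, h0, by simpa using hs, ha, hl⟩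
  rcases ks.eq_or_lt with rfl | hs0
  · exact Or.inr ⟨d, k0, by simpa using ks', kb, kl⟩
  · refine Or.inl ⟨fun i => s * c i + t * d i, ?_, ?_, ?_, ?_⟩
    · intro i; have := h0 i; have := k0 i; positivity
    · simp only [add_smul, mul_smul, Finset.sum_add_distrib, ← Finset.smul_sum]
      rw [eq_neg_of_add_eq_zero_left hs, eq_neg_of_add_eq_zero_left ks']
      module
    · have := k0 a; positivity
    · intro i hi; simp [hl i hi, kl i (hi.trans_le hab)]

/-- Dual activity in the contraction of `u`. -/
def DC (w : Fin n → V) (u : V) (a : Fin n) : Prop :=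
  ∃ f : V →ₗ[ℝ] ℝ, (∀ i, 0 ≤ f (w i)) ∧ f u = 0 ∧ 0 < f (w a) ∧ ∀ i < a, f (w i) = 0

lemma d_mix {a b : Fin n} (hab : a ≤ b) (h : DP w u a) (h' : DP w (-u) b) :
    DC w u a ∨ DC w u b := by
  obtain ⟨f, h0, ht, ha, hl⟩ := h
  obtain ⟨g, k0, ks, kb, kl⟩ := h'
  rw [map_neg] at ks
  rcases ht.eq_or_lt with ht | ht
  · exact Or.inl ⟨f, h0, ht.symm, ha, hl⟩
  rcases ks.eq_or_lt with ks | ks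
  · exact Or.inr ⟨g, k0, by linarith, kb, kl⟩
  · refine Or.inl ⟨(-g u) • f + (f u) • g, ?_, ?_, ?_, ?_⟩
    · intro i; have := h0 i; have := k0 i
      simp only [LinearMap.add_apply, LinearMap.smul_apply, smul_eq_mul]; positivity
    · simp only [LinearMap.add_apply, LinearMap.smul_apply, smul_eq_mul]; ring
    · have := k0 a
      simp only [LinearMap.add_apply, LinearMap.smul_apply, smul_eq_mul]; positivity
    · intro i hi; simp [hl i hi, kl i (hi.trans_le hab)]

lemma DP_of_DC {a : Fin n} (h : DC w u a) : DP w u a := by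
  obtain ⟨f, h0, hu, ha, hl⟩ := h
  exact ⟨f, h0, hu.ge, ha, hl⟩

lemma DC_neg {a : Fin n} : DC w (-u) a ↔ DC w u a := by
  simp [DC]

lemma od_mix {a b : Fin n} (h : OP w u a) (h' : DP w u b) : OActive w a ∨ DC w u b := by
  obtain ⟨c, t, h0, ht, hs, ha, hl⟩ := h
  obtain ⟨f, k0, ks, kb, kl⟩ := h'
  rcases ht.eq_or_lt with rfl | ht
  · exact Or.inl ⟨c, h0, by simpa using hs, ha, hl⟩
  rcases ks.eq_or_lt with ks | ks
  · exact Or.inr ⟨f, k0, ks.symm, kb, kl⟩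
  exfalso
  have := congrArg f hs
  simp only [map_add, map_sum, map_smul, smul_eq_mul, map_zero] at this
  have h1 : 0 ≤ ∑ i, c i * f (w i) := Finset.sum_nonneg fun i _ => mul_nonneg (h0 i) (k0 i)
  have : 0 < t * f u := by positivity
  linarith

lemma o_union {a : Fin n} :
    OActive (fun i => (span ℝ {u}).mkQ (w i)) a ↔ OP w u a ∨ OP w (-u) a := by
  constructor
  · rintro ⟨c, h0, hs, ha, hl⟩
    simp only [← map_smul, ← map_sum] at hs
    rw [Submodule.mkQ_apply, Submodule.Quotient.mk_eq_zero, Submodule.mem_span_singleton] at hs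
    obtain ⟨t, ht⟩ := hs
    rcases le_total 0 t with h | h
    · exact Or.inr ⟨c, t, h0, h, by rw [← ht]; module, ha, hl⟩
    · exact Or.inl ⟨c, -t, h0, by linarith, by rw [← ht]; module, ha, hl⟩
  · have key : ∀ (c : Fin n → ℝ) (t : ℝ), (∑ i, c i • w i) + t • u = 0 →
        ∑ i, c i • (span ℝ {u}).mkQ (w i) = 0 := by
      intro c t h
      simp only [← map_smul, ← map_sum]
      rw [Submodule.mkQ_apply, Submodule.Quotient.mk_eq_zero, Submodule.mem_span_singleton]
      exact ⟨-t, by rw [eq_neg_of_add_eq_zero_left h]; module⟩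
    rintro (⟨c, t, h0, ht, hs, ha, hl⟩ | ⟨c, t, h0, ht, hs, ha, hl⟩)
    · exact ⟨c, h0, key c t hs, ha, hl⟩
    · exact ⟨c, h0, key c (-t) (by rw [← hs]; module), ha, hl⟩

lemma d_union {a : Fin n} : ODualActive w a ↔ DP w u a ∨ DP w (-u) a := by
  constructor
  · rintro ⟨f, h0, ha, hl⟩
    rcases le_total 0 (f u) with h | h
    · exact Or.inl ⟨f, h0, h, ha, hl⟩
    · exact Or.inr ⟨f, h0, by simpa using h, ha, hl⟩
  · rintro (⟨f, h0, _, ha, hl⟩ | ⟨f, h0, _, ha, hl⟩) <;> exact ⟨f, h0, ha, hl⟩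

lemma dc_iff {a : Fin n} :
    ODualActive (fun i => (span ℝ {u}).mkQ (w i)) a ↔ DC w u a := by
  constructor
  · rintro ⟨f, h0, ha, hl⟩
    refine ⟨f ∘ₗ (span ℝ {u}).mkQ, h0, ?_, ha, hl⟩
    have : (span ℝ {u}).mkQ u = 0 := by
      rw [Submodule.mkQ_apply, Submodule.Quotient.mk_eq_zero]
      exact Submodule.mem_span_singleton_self u
    rw [LinearMap.comp_apply, this, map_zero]
  · rintro ⟨f, h0, hu, ha, hl⟩
    refine ⟨(span ℝ {u}).liftQ f ?_, ?_, ?_, ?_⟩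
    · rw [Submodule.span_singleton_le_iff_mem]; exact hu
    · simpa using h0
    · simpa using ha
    · simpa using hl

/-- One of the two orientations of the last element behaves as the deletion, the other as the
contraction. -/
def Match (w : Fin n → V) (u : V) : Prop :=
  ∀ a, (OActive w a ↔ OP w u a) ∧ (ODualActive w a ↔ DP w u a) ∧
    (OActive (fun i => (span ℝ {u}).mkQ (w i)) a ↔ OP w (-u) a) ∧
    (ODualActive (fun i => (span ℝ {u}).mkQ (w i)) a ↔ DP w (-u) a)

lemma key_match : Match w u ∨
  (∀ a, (OActive w a ↔ OP w (-u) a) ∧ (ODualActive w a ↔ DP w (-u) a) ∧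
    (OActive (fun i => (span ℝ {u}).mkQ (w i)) a ↔ OP w u a) ∧
    (ODualActive (fun i => (span ℝ {u}).mkQ (w i)) a ↔ DP w u a)) := by
  simp only [Match, o_union, dc_iff, d_union w u]
  have h1 : ∀ a, OActive w a → OP w u a := fun a => OP_of_OActive w u
  have h2 : ∀ a, OActive w a → OP w (-u) a := fun a => OP_of_OActive w (-u)
  have h3 : ∀ a, DC w u a → DP w u a := fun a => DP_of_DC w u
  have h4 : ∀ a, DC w u a → DP w (-u) a := fun a h => DP_of_DC w (-u) ((DC_neg w u).2 h)
  have h5 : ∀ a b, OP w u a → OP w (-u) b → OActive w a ∨ OActive w b := by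
    intro a b h h'
    rcases le_total a b with hab | hab
    · exact o_mix w u hab h h'
    · exact (o_mix w (-u) hab h' (by simpa using h)).symm
  have h6 : ∀ a b, DP w u a → DP w (-u) b → DC w u a ∨ DC w u b := by
    intro a b h h'
    rcases le_total a b with hab | hab
    · exact d_mix w u hab h h'
    · have := (d_mix w (-u) hab h' (by simpa using h)).symm
      simpa only [DC_neg] using this
  have h7 : ∀ a b, OP w u a → DP w u b → OActive w a ∨ DC w u b := fun a b => od_mix w u
  have h8 : ∀ a b, OP w (-u) a → DP w (-u) b → OActive w a ∨ DC w u b := fun a b h h' => by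
    simpa only [DC_neg] using od_mix w (-u) h h'
  by_cases hc : (∃ a, OP w u a ∧ ¬ OActive w a) ∨ (∃ a, DP w (-u) a ∧ ¬ DC w u a)
  · right
    have g1 : ∀ b, OP w (-u) b → OActive w b := by
      rcases hc with ⟨a, ha, hn⟩ | ⟨a, ha, hn⟩
      · intro b hb; exact (h5 a b ha hb).resolve_left hn
      · intro b hb; exact (h8 b a hb ha).resolve_right hn
    have g2 : ∀ b, DP w u b → DC w u b := by
      rcases hc with ⟨a, ha, hn⟩ | ⟨a, ha, hn⟩
      · intro b hb; exact (h7 a b ha hb).resolve_left hn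
      · intro b hb; exact (h6 b a hb ha).resolve_right hn
    intro a
    have := h1 a; have := h2 a; have := h3 a; have := h4 a; have := g1 a; have := g2 a
    tauto
  · left
    push Not at hc
    intro a
    have := h1 a; have := h2 a; have := h3 a; have := h4 a; have := hc.1 a; have := hc.2 a
    tauto

lemma ncard_split (P : Fin (n + 1) → Prop) [Decidable (P (Fin.last n))] :
    {a | P a}.ncard = {a : Fin n | P a.castSucc}.ncard + if P (Fin.last n) then 1 else 0 := by
  classical
  rw [Set.ncard_eq_toFinset_card', Set.ncard_eq_toFinset_card']
  simp only [Set.toFinset_ofPred]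
  rw [Finset.card_filter, Finset.card_filter, Fin.sum_univ_castSucc]
  congr

/-- the subset of `Fin (n+1)` not containing the last element -/
def up (B : Finset (Fin n)) : Finset (Fin (n + 1)) := B.map Fin.castSuccEmb

/-- the subset of `Fin (n+1)` containing the last element -/
def upl (B : Finset (Fin n)) : Finset (Fin (n + 1)) := insert (Fin.last n) (up B)

@[simp] lemma cast_mem_up (B : Finset (Fin n)) (i : Fin n) : i.castSucc ∈ up B ↔ i ∈ B := by
  simp [up]

@[simp] lemma last_mem_up (B : Finset (Fin n)) : Fin.last n ∉ up B := by
  simp [up]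

@[simp] lemma cast_mem_upl (B : Finset (Fin n)) (i : Fin n) : i.castSucc ∈ upl B ↔ i ∈ B := by
  simp [upl]

@[simp] lemma last_mem_upl (B : Finset (Fin n)) : Fin.last n ∈ upl B := by
  simp [upl]

lemma sum_split (F : Finset (Fin (n + 1)) → ℝ) :
    ∑ A, F A = ∑ B : Finset (Fin n), F (up B) + ∑ B : Finset (Fin n), F (upl B) := by
  have e : (Finset.univ : Finset (Finset (Fin (n + 1)))) =
      (insert (Fin.last n) ((Finset.univ : Finset (Fin n)).map Fin.castSuccEmb)).powerset := by
    ext A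
    simp only [Finset.mem_univ, Finset.mem_powerset, true_iff]
    intro i _
    induction i using Fin.lastCases <;> simp
  have s : ((Finset.univ : Finset (Fin n)).map Fin.castSuccEmb).powerset =
      (Finset.univ : Finset (Finset (Fin n))).map (Finset.mapEmbedding Fin.castSuccEmb).toEmbedding := by
    ext A
    simp only [Finset.mem_powerset, Finset.mem_map, Finset.mem_univ, true_and]
    rw [Finset.subset_map_iff]
    simp [Finset.mapEmbedding_apply, eq_comm]
  rw [e, Finset.sum_powerset_insert (by simp), s, Finset.sum_map, Finset.sum_map]
  rfl

lemma reorient_up (v : Fin (n + 1) → V) (B : Finset (Fin n)) :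
    (fun i : Fin n => reorient v (up B) i.castSucc) = reorient (fun i => v i.castSucc) B := by
  funext i; simp [reorient]

lemma reorient_upl (v : Fin (n + 1) → V) (B : Finset (Fin n)) :
    (fun i : Fin n => reorient v (upl B) i.castSucc) = reorient (fun i => v i.castSucc) B := by
  funext i; simp [reorient]

lemma reorient_mkQ (B : Finset (Fin n)) :
    reorient (fun i => (span ℝ {u}).mkQ (w i)) B = fun i => (span ℝ {u}).mkQ (reorient w B i) := by
  funext i; simp only [reorient]; split_ifs <;> simp

lemma span_reorient (B : Finset (Fin n)) :
    span ℝ (Set.range (reorient w B)) = span ℝ (Set.range w) := by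
  apply le_antisymm <;> rw [span_le] <;> rintro _ ⟨i, rfl⟩
  · simp only [reorient]
    split_ifs
    · exact neg_mem (subset_span ⟨i, rfl⟩)
    · exact subset_span ⟨i, rfl⟩
  · have h : reorient w B i ∈ span ℝ (Set.range (reorient w B)) := subset_span ⟨i, rfl⟩
    simp only [reorient] at h
    split_ifs at h
    · simpa [reorient] using neg_mem h
    · exact h

open Classical in
lemma theta_up (v : Fin (n + 1) → V) (B : Finset (Fin n)) :
    theta v (up B) =
      {a : Fin n | a ∉ B ∧ OP (reorient (fun i => v i.castSucc) B) (v (Fin.last n)) a}.ncard +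
        if v (Fin.last n) = 0 then 1 else 0 := by
  unfold theta
  rw [ncard_split]
  simp only [OActive_castSucc, OActive_last, reorient_up, cast_mem_up]
  simp [reorient]

lemma theta_upl (v : Fin (n + 1) → V) (B : Finset (Fin n)) :
    theta v (upl B) =
      {a : Fin n | a ∉ B ∧ OP (reorient (fun i => v i.castSucc) B) (-v (Fin.last n)) a}.ncard := by
  classical
  unfold theta
  rw [ncard_split]
  simp only [OActive_castSucc, OActive_last, reorient_upl, cast_mem_upl]
  simp [reorient]

open Classical in
lemma thetaStar_up (v : Fin (n + 1) → V) (B : Finset (Fin n)) :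
    thetaStar v (up B) =
      {a : Fin n | a ∉ B ∧ DP (reorient (fun i => v i.castSucc) B) (v (Fin.last n)) a}.ncard +
        if v (Fin.last n) ∉ span ℝ (Set.range fun i : Fin n => v i.castSucc) then 1 else 0 := by
  unfold thetaStar
  rw [ncard_split]
  simp only [ODualActive_castSucc, ODualActive_last, reorient_up, cast_mem_up, span_reorient]
  simp [reorient]

lemma thetaStar_upl (v : Fin (n + 1) → V) (B : Finset (Fin n)) :
    thetaStar v (upl B) =
      {a : Fin n | a ∉ B ∧ DP (reorient (fun i => v i.castSucc) B) (-v (Fin.last n)) a}.ncard := by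
  classical
  unfold thetaStar
  rw [ncard_split]
  simp only [ODualActive_castSucc, ODualActive_last, reorient_upl, cast_mem_upl]
  simp [reorient]

lemma loop_O (a : Fin n) : OP w 0 a ↔ OActive w a :=
  ⟨fun h => by simpa using o_mix w 0 le_rfl h (by simpa using h), OP_of_OActive w 0⟩

lemma loop_D (a : Fin n) : DP w 0 a ↔ ODualActive w a := by
  simp [d_union w 0]

lemma coloop_O (hu : u ∉ span ℝ (Set.range w)) (a : Fin n) : OP w u a ↔ OActive w a := by
  refine ⟨?_, OP_of_OActive w u⟩
  rintro ⟨c, t, h0, ht, hs, ha, hl⟩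
  have hm : ∑ i, c i • w i ∈ span ℝ (Set.range w) :=
    sum_mem fun i _ => smul_mem _ _ (subset_span ⟨i, rfl⟩)
  have h0t : t = 0 := by
    by_contra hne
    apply hu
    rw [eq_neg_of_add_eq_zero_left hs] at hm
    exact (smul_mem_iff _ hne).1 (neg_mem_iff.1 hm)
  exact ⟨c, h0, by simpa [h0t] using hs, ha, hl⟩

lemma coloop_D (hu : u ∉ span ℝ (Set.range w)) (a : Fin n) : DP w u a ↔ ODualActive w a := by
  refine ⟨fun h => (d_union w u).2 (Or.inl h), ?_⟩
  rintro ⟨f, h0, ha, hl⟩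
  obtain ⟨g, hg, hk⟩ := Submodule.exists_le_ker_of_notMem hu
  have hz : ∀ i : Fin n, g (w i) = 0 := fun i => hk (subset_span ⟨i, rfl⟩)
  refine ⟨f - (f u / g u) • g, ?_, ?_, ?_, ?_⟩
  · simpa [hz] using h0
  · simp [hg]
  · simpa [hz] using ha
  · simpa [hz] using hl

lemma vrank_up (v : Fin (n + 1) → V) (B : Finset (Fin n)) :
    vrank v ↑(up B) = vrank (fun i => v i.castSucc) ↑B := by
  unfold vrank
  have : v '' ↑(up B) = (fun i : Fin n => v i.castSucc) '' ↑B := by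
    simp [up, Set.image_image]
  rw [this]

/-- rank of `S` together with the extra vector `u` -/
noncomputable def jrank (w : Fin n → V) (u : V) (S : Set (Fin n)) : ℕ :=
  Module.finrank ℝ ↥(span ℝ (w '' S) ⊔ span ℝ {u})

lemma vrank_upl (v : Fin (n + 1) → V) (B : Finset (Fin n)) :
    vrank v ↑(upl B) =
      jrank (fun i : Fin n => v i.castSucc) (v (Fin.last n)) ↑B := by
  unfold vrank jrank
  have : v '' ↑(upl B) = ((fun i : Fin n => v i.castSucc) '' ↑B) ∪ {v (Fin.last n)} := by
    simp [upl, up, Set.image_insert_eq, Set.image_image]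
  rw [this, span_union]

lemma vrank_univ_succ (v : Fin (n + 1) → V) :
    vrank v Set.univ = vrank v ↑(upl (Finset.univ : Finset (Fin n))) := by
  congr 1
  ext i
  induction i using Fin.lastCases <;> simp

lemma vrank_mono [FiniteDimensional ℝ V] (S : Set (Fin n)) : vrank w S ≤ vrank w Set.univ :=
  Submodule.finrank_mono (span_mono (Set.image_mono (Set.subset_univ S)))

lemma vrank_le_card (B : Finset (Fin n)) : vrank w ↑B ≤ B.card := by
  classical
  unfold vrank
  rw [← Finset.coe_image]
  exact (finrank_span_finset_le_card _).trans Finset.card_image_le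

lemma finrank_contract [FiniteDimensional ℝ V] (hu : u ≠ 0) (S : Set (Fin n)) :
    jrank w u S = vrank (fun i => (span ℝ {u}).mkQ (w i)) S + 1 := by
  unfold jrank
  set T := span ℝ (w '' S) ⊔ span ℝ {u} with hT
  have h := ((span ℝ {u}).mkQ.domRestrict T).finrank_range_add_finrank_ker
  rw [LinearMap.range_domRestrict, LinearMap.ker_domRestrict, Submodule.ker_mkQ] at h
  have h1 : Module.finrank ℝ ↥(Submodule.comap T.subtype (span ℝ {u})) = 1 := by
    rw [LinearEquiv.finrank_eq (Submodule.comapSubtypeEquivOfLe le_sup_right), finrank_span_singleton hu]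
  have h2 : T.map (span ℝ {u}).mkQ = span ℝ ((fun i => (span ℝ {u}).mkQ (w i)) '' S) := by
    rw [hT, Submodule.map_sup, Submodule.map_span, ← Set.image_comp]
    have : Submodule.map (span ℝ {u}).mkQ (span ℝ {u}) = ⊥ := Submodule.mkQ_map_self _
    rw [this, sup_bot_eq]; rfl
  have h1' : Module.finrank ℝ ↥(Submodule.comap T.subtype (span ℝ {u})) = 1 := h1
  rw [h2] at h
  unfold vrank
  rw [← h]
  congr 1

lemma finrank_coloop [FiniteDimensional ℝ V] (hu : u ∉ span ℝ (Set.range w)) (S : Set (Fin n)) :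
    jrank w u S = vrank w S + 1 := by
  unfold jrank
  have hu' : u ∉ span ℝ (w '' S) := fun h => hu (span_mono (Set.image_subset_range _ _) h)
  have h := Submodule.finrank_sup_add_finrank_inf_eq (span ℝ (w '' S)) (span ℝ {u})
  have hne : u ≠ 0 := fun h => hu (h ▸ zero_mem _)
  have hd : span ℝ (w '' S) ⊓ span ℝ {u} = ⊥ := by
    rw [← disjoint_iff]
    exact (Submodule.disjoint_span_singleton' hne).2 hu'
  rw [hd, finrank_bot, finrank_span_singleton hne] at h
  exact h

end helpers

lemma main_aux {n : ℕ} : ∀ {V : Type*} [AddCommGroup V] [Module ℝ V] [FiniteDimensional ℝ V]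
    (v : Fin n → V) (x y : ℝ),
    tutteV v x y =
      ∑ A : Finset (Fin n), (x - 1) ^ thetaStar v A * (y - 1) ^ theta v A := by
  induction n with
  | zero =>
    intro V _ _ _ v x y
    unfold tutteV
    refine Finset.sum_congr rfl fun A _ => ?_
    have h1 : thetaStar v A = 0 := by
      unfold thetaStar; convert Set.ncard_empty (Fin 0); exact Subsingleton.elim _ _
    have h2 : theta v A = 0 := by
      unfold theta; convert Set.ncard_empty (Fin 0); exact Subsingleton.elim _ _
    have h3 : (A : Set (Fin 0)) = Set.univ := Subsingleton.elim _ _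
    have h4 : A = ∅ := Subsingleton.elim _ _
    rw [h1, h2, h3, h4]
    simp
  | succ n ih =>
    intro V _ _ _ v x y
    set w : Fin n → V := fun i => v i.castSucc with hw
    set u : V := v (Fin.last n) with hu
    have ihw := ih w x y
    unfold tutteV at ihw ⊢
    rw [sum_split, sum_split]
    simp only [vrank_up, vrank_upl, vrank_univ_succ, theta_up, theta_upl, thetaStar_up,
      thetaStar_upl, Finset.coe_univ]
    simp only [← hw, ← hu]
    have cu : ∀ B : Finset (Fin n), (up B).card = B.card := fun B => by simp [up]
    have cul : ∀ B : Finset (Fin n), (upl B).card = B.card + 1 := fun B => by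
      rw [upl, Finset.card_insert_of_notMem (last_mem_up B), cu]
    simp only [cu, cul]
    by_cases h0 : u = 0
    · have hs : u ∈ span ℝ (Set.range w) := h0 ▸ zero_mem _
      have e1 : ∀ S : Set (Fin n), jrank w u S = vrank w S := by
        intro S
        unfold jrank vrank
        rw [h0, Submodule.span_zero_singleton, sup_bot_eq]
      have i0 : ¬ (u ∉ span ℝ (Set.range w)) := not_not.2 hs
      simp only [e1, if_neg i0]
      simp only [h0, neg_zero, loop_O, loop_D, not_true_eq_false, if_true, if_false, add_zero]
      have e2 : ∀ B : Finset (Fin n), B.card + 1 - vrank w ↑B = (B.card - vrank w ↑B) + 1 :=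
        fun B => by have := vrank_le_card w B; omega
      simp only [e2, pow_succ, ← mul_assoc, ← Finset.sum_mul]
      rw [ihw]
      simp only [theta, thetaStar]
      rw [add_comm]
    by_cases h1 : u ∉ span ℝ (Set.range w)
    · have h2 : ∀ B, u ∉ span ℝ (Set.range (reorient w B)) := fun B => by rwa [span_reorient]
      have h3 : ∀ B, -u ∉ span ℝ (Set.range (reorient w B)) := fun B => by
        rw [neg_mem_iff]; exact h2 B
      simp only [finrank_coloop w u h1, coloop_O _ _ (h2 _), coloop_D _ _ (h2 _),
        coloop_O _ _ (h3 _), coloop_D _ _ (h3 _), h0, h1, not_false_eq_true, if_true, if_false,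
        add_zero]
      have e2 : ∀ B : Finset (Fin n), vrank w Set.univ + 1 - vrank w ↑B =
          (vrank w Set.univ - vrank w ↑B) + 1 :=
        fun B => by have := vrank_mono w (B : Set (Fin n)); omega
      simp only [e2, pow_succ, Nat.add_sub_add_right, mul_right_comm _ (x - 1), ← Finset.sum_mul]
      rw [ihw]
      simp only [theta, thetaStar]
    · have ihq := ih (fun i => (span ℝ {u}).mkQ (w i)) x y
      unfold tutteV at ihq
      have e0 : jrank w u Set.univ = vrank w Set.univ := by
        unfold vrank jrank
        rw [sup_eq_left.2]
        rw [Submodule.span_singleton_le_iff_mem, Set.image_univ]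
        exact not_not.1 h1
      have e1 := finrank_contract w u h0
      have lhs : ∀ B : Finset (Fin n),
          (x - 1) ^ (jrank w u Set.univ - vrank w ↑B) * (y - 1) ^ (B.card - vrank w ↑B) =
          (x - 1) ^ (vrank w Set.univ - vrank w ↑B) * (y - 1) ^ (B.card - vrank w ↑B) := fun B => by rw [e0]
      simp only [lhs]
      simp only [e1, Nat.add_sub_add_right]
      rw [ihw, ihq, ← Finset.sum_add_distrib, ← Finset.sum_add_distrib]
      refine Finset.sum_congr rfl fun B _ => ?_
      simp only [theta, thetaStar, reorient_mkQ, h0, h1, if_false, add_zero]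
      rcases key_match (reorient w B) u with hm | hm
      · simp only [(hm _).1, (hm _).2.1, (hm _).2.2.1, (hm _).2.2.2]
      · simp only [(hm _).1, (hm _).2.1, (hm _).2.2.1, (hm _).2.2.2]
        rw [add_comm]

/-- expansion of the Tutte polynomial in the activities `θ*` and `θ`:
`t(x, y) = ∑_{A ⊆ Fin n} (x-1)^θ*(A) (y-1)^θ(A)`. -/
theorem statement10 {n : ℕ} {V : Type*} [AddCommGroup V] [Module ℝ V] [FiniteDimensional ℝ V]
    (v : Fin n → V) (x y : ℝ) :
    tutteV v x y =
      ∑ A : Finset (Fin n), (x - 1) ^ thetaStar v A * (y - 1) ^ theta v A := by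
  exact main_aux v x y
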